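/- Let n ≥ 1, m > n, and let p ∈ P^log(ℝ^n) be a measurable exponent with 2 ≤ p⁻ = p_∞ and p⁺ < ∞. Define φ(t) = 2/p⁻ − 1/p⁺ for 0 < t ≤ 1 and φ(t) = 1/p⁺ for t > 1. Then there exists a constant C > 0, depending only on m, n and p, such that for every t > 0 and all u, v ∈ L^{p(·)}(ℝ^n), ‖η_{t,m} * (uv)‖_{L^{p(·)}(ℝ^n)} ≤ C t^{−nφ(t)} ‖u‖_{L^{p(·)}(ℝ^n)} ‖v‖_{L^{p(·)}(ℝ^n)}. -/

import Mathlib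

open MeasureTheory Filter Real
open scoped ENNReal

noncomputable section

/-- Euclidean space `ℝⁿ`. -/
abbrev Esp (n : ℕ) := EuclideanSpace ℝ (Fin n)

/-- The variable exponent modular `ρ_{p(·)}(f) = ∫_{ℝⁿ} |f(x)|^{p(x)} dx`. -/
def vMod (n : ℕ) (p : Esp n → ℝ) (f : Esp n → ℝ) : ℝ≥0∞ :=
  ∫⁻ x, (ENNReal.ofReal |f x|) ^ (p x) ∂volume

/-- The Luxemburg norm `‖f‖_{L^{p(·)}} = inf {λ > 0 : ρ_{p(·)}(f/λ) ≤ 1}`. -/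
def luxNorm (n : ℕ) (p : Esp n → ℝ) (f : Esp n → ℝ) : ℝ :=
  sInf {lam : ℝ | 0 < lam ∧ vMod n p (fun x => f x / lam) ≤ 1}

/-- Membership in the variable exponent Lebesgue space `L^{p(·)}(ℝⁿ)`. -/
def MemVLp (n : ℕ) (p : Esp n → ℝ) (f : Esp n → ℝ) : Prop :=
  AEMeasurable f volume ∧ ∃ lam : ℝ, 0 < lam ∧ vMod n p (fun x => f x / lam) ≤ 1

/-- Global log-Hölder continuity of `1/p` with decay value `l` (representing `l = 1/p_∞`). -/
def IsLogHolder (n : ℕ) (p : Esp n → ℝ) (l : ℝ) : Prop :=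
  ∃ c : ℝ, 0 < c ∧
    (∀ x y : Esp n, |1 / p x - 1 / p y| ≤ c / Real.log (Real.exp 1 + 1 / ‖x - y‖)) ∧
    (∀ x : Esp n, |1 / p x - l| ≤ c / Real.log (Real.exp 1 + ‖x‖))

/-- The kernel `η_{t,m}(x) = t^{-n} (1 + |x|/t)^{-m}`. -/
def etaKer (n : ℕ) (t m : ℝ) (x : Esp n) : ℝ :=
  t ^ (-(n : ℝ)) * (1 + ‖x‖ / t) ^ (-m)

/-- Convolution `(u * v)(x) = ∫ u(x - y) v(y) dy`. -/
def convR (n : ℕ) (u v : Esp n → ℝ) (x : Esp n) : ℝ :=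
  ∫ y, u (x - y) * v y ∂volume

theorem aux_jensen {α : Type*} [MeasurableSpace α] (μ : Measure α) (g w : α → ℝ≥0∞)
    (hg : AEMeasurable g μ) (hw : AEMeasurable w μ) (r : ℝ) (hr : 1 ≤ r) :
    (∫⁻ y, g y * w y ∂μ) ^ r ≤ (∫⁻ y, g y ∂μ) ^ (r - 1) * ∫⁻ y, g y * w y ^ r ∂μ := by
  rcases hr.eq_or_lt with h | h
  · subst h
    simp
  have hr0 : 0 < r := by linarith
  have hc : (Real.conjExponent r).HolderConjugate r := (Real.HolderConjugate.conjExponent h).symm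
  have hq0 : 0 < Real.conjExponent r := hc.pos
  have key := ENNReal.lintegral_mul_le_Lp_mul_Lq μ hc
    (f := fun y => g y ^ (1 / Real.conjExponent r)) (g := fun y => g y ^ (1 / r) * w y)
    (hg.pow_const _) ((hg.pow_const _).mul hw)
  have e1 : ∀ y, ((fun y => g y ^ (1 / Real.conjExponent r)) * fun y => g y ^ (1 / r) * w y) y
      = g y * w y := by
    intro y
    simp only [Pi.mul_apply]
    rw [← mul_assoc, ← ENNReal.rpow_add_of_nonneg _ _ (by positivity) (by positivity)]
    have : 1 / Real.conjExponent r + 1 / r = 1 := by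
      have := hc.inv_add_inv_eq_one
      simpa [one_div] using this
    rw [this, ENNReal.rpow_one]
  have e2 : ∀ y, (g y ^ (1 / Real.conjExponent r)) ^ (Real.conjExponent r) = g y := by
    intro y
    rw [← ENNReal.rpow_mul, one_div_mul_cancel hq0.ne', ENNReal.rpow_one]
  have e3 : ∀ y, (g y ^ (1 / r) * w y) ^ r = g y * w y ^ r := by
    intro y
    rw [ENNReal.mul_rpow_of_nonneg _ _ hr0.le, ← ENNReal.rpow_mul, one_div_mul_cancel hr0.ne',
      ENNReal.rpow_one]
  simp only [e1, e2, e3] at key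
  calc (∫⁻ y, g y * w y ∂μ) ^ r ≤ _ := ENNReal.rpow_le_rpow key hr0.le
    _ = _ := by
      rw [ENNReal.mul_rpow_of_nonneg _ _ hr0.le, ← ENNReal.rpow_mul, ← ENNReal.rpow_mul,
        one_div_mul_cancel hr0.ne', ENNReal.rpow_one]
      congr 2
      rw [Real.conjExponent]
      field_simp

theorem etaKer_nonneg' (n : ℕ) (t m : ℝ) (ht : 0 < t) (x : Esp n) : 0 ≤ etaKer n t m x := by
  unfold etaKer; positivity

theorem etaKer_le' (n : ℕ) (t m : ℝ) (ht : 0 < t) (hm : 0 ≤ m) (x : Esp n) :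
    etaKer n t m x ≤ t ^ (-(n : ℝ)) := by
  unfold etaKer
  have h1 : (1 + ‖x‖ / t) ^ (-m) ≤ 1 :=
    Real.rpow_le_one_of_one_le_of_nonpos (by have : 0 ≤ ‖x‖ / t := by positivity
                                             linarith) (by linarith)
  have : 0 ≤ t ^ (-(n : ℝ)) := by positivity
  nlinarith

theorem etaKer_meas (n : ℕ) (t m : ℝ) : Measurable (etaKer n t m) := by
  unfold etaKer; fun_prop

theorem etaKer_lint (n : ℕ) (t m : ℝ) (ht : 0 < t) :
    ∫⁻ x : Esp n, ENNReal.ofReal (etaKer n t m x)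
      = ∫⁻ x : Esp n, ENNReal.ofReal ((1 + ‖x‖) ^ (-m)) := by
  have hmap := Measure.map_addHaar_smul (volume : Measure (Esp n)) (inv_ne_zero ht.ne')
  have hmeas : Measurable fun x : Esp n => ENNReal.ofReal ((1 + ‖x‖) ^ (-m)) := by fun_prop
  have h1 : ∫⁻ x : Esp n, ENNReal.ofReal ((1 + ‖t⁻¹ • x‖) ^ (-m))
      = ENNReal.ofReal (t ^ n) * ∫⁻ x : Esp n, ENNReal.ofReal ((1 + ‖x‖) ^ (-m)) := by
    rw [← lintegral_map (f := fun x : Esp n => ENNReal.ofReal ((1 + ‖x‖) ^ (-m)))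
      (g := fun x : Esp n => t⁻¹ • x) hmeas (by fun_prop), hmap, lintegral_smul_measure]
    simp [abs_of_pos ht]
  have h2 : ∀ x : Esp n, ENNReal.ofReal (etaKer n t m x) =
      ENNReal.ofReal (t ^ (-(n : ℝ))) * ENNReal.ofReal ((1 + ‖t⁻¹ • x‖) ^ (-m)) := by
    intro x
    rw [etaKer, ENNReal.ofReal_mul (by positivity), norm_smul, Real.norm_of_nonneg (by positivity),
      div_eq_inv_mul]
  simp only [h2]
  rw [lintegral_const_mul _ (by fun_prop), h1, ← mul_assoc, ← ENNReal.ofReal_mul (by positivity),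
    Real.rpow_neg ht.le, Real.rpow_natCast, inv_mul_cancel₀ (by positivity), ENNReal.ofReal_one,
    one_mul]

/-- pointwise comparison of the exponents `pm` and `p`. -/
theorem aux_pt (a E L p pm pp c N : ℝ) (ha : 0 ≤ a) (hE : 1 ≤ E) (hL : 0 < L) (hEL : E = Real.exp L)
    (hpm : 2 ≤ pm) (h1 : pm ≤ p) (h2 : p ≤ pp) (hN : 0 ≤ N) (hc : 0 < c)
    (h : |1 / p - 1 / pm| ≤ c / L) :
    a ^ pm ≤ Real.exp (N * (pp * pm * c)) * a ^ p + E ^ (-(N * pm)) := by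
  have hE0 : 0 < E := by linarith
  have hpp : 0 < pp := by linarith
  have hB : 1 ≤ Real.exp (N * (pp * pm * c)) := Real.one_le_exp (by positivity)
  have hq : 0 ≤ E ^ (-(N * pm)) := by positivity
  rcases le_total 1 a with h3 | h3
  · have : a ^ pm ≤ a ^ p := Real.rpow_le_rpow_of_exponent_le h3 h1
    nlinarith [Real.rpow_nonneg ha p]
  rcases le_total a (E ^ (-N)) with h4 | h4
  · have : a ^ pm ≤ (E ^ (-N)) ^ pm := Real.rpow_le_rpow ha h4 (by linarith)
    rw [← Real.rpow_mul hE0.le, neg_mul] at this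
    have : 0 ≤ Real.exp (N * (pp * pm * c)) * a ^ p := by positivity
    linarith
  · have ha0 : 0 < a := lt_of_lt_of_le (by positivity) h4
    have h5 : a ^ pm = a ^ (pm - p) * a ^ p := by rw [← Real.rpow_add ha0]; ring_nf
    have h6 : a ^ (pm - p) ≤ (E ^ (-N)) ^ (pm - p) :=
      Real.rpow_le_rpow_of_nonpos (by positivity) h4 (by linarith)
    have h7 : (E ^ (-N)) ^ (pm - p) = Real.exp (L * (N * (p - pm))) := by
      rw [← Real.rpow_mul hE0.le, hEL, ← Real.exp_mul]; ring_nf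
    have h8 : L * (p - pm) ≤ pp * pm * c := by
      have hp0 : 0 < p := by linarith
      have hm0 : 0 < pm := by linarith
      have e : p - pm = p * pm * (1 / pm - 1 / p) := by field_simp
      have h9 : 1 / pm - 1 / p ≤ c / L := by
        have := neg_abs_le (1 / p - 1 / pm); linarith
      have h10 : L * (1 / pm - 1 / p) ≤ c := by
        rw [le_div_iff₀ hL] at h9; linarith
      rw [e]
      calc L * (p * pm * (1 / pm - 1 / p)) = p * pm * (L * (1 / pm - 1 / p)) := by ring
        _ ≤ p * pm * c := by gcongr
        _ ≤ pp * pm * c := by gcongr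
    have h11 : Real.exp (L * (N * (p - pm))) ≤ Real.exp (N * (pp * pm * c)) := by
      apply Real.exp_le_exp.2
      nlinarith
    rw [h5]
    have : a ^ (pm - p) * a ^ p ≤ Real.exp (N * (pp * pm * c)) * a ^ p := by
      gcongr; linarith
    linarith

theorem aux_pt2 (f A t n r p pm pp : ℝ) (hf : 0 ≤ f) (hA : 1 ≤ A) (ht : 0 < t) (hn : 0 ≤ n)
    (hr : r = pm / 2) (hpm : 2 ≤ pm) (h1 : pm ≤ p) (h2 : p ≤ pp)
    (hfr : f ^ r ≤ A * t ^ (-n)) :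
    (f / (A * t ^ (-n * (if t ≤ 1 then 2 / pm - 1 / pp else 1 / pp)))) ^ p ≤ f ^ r / A := by
  set φ := (if t ≤ 1 then 2 / pm - 1 / pp else 1 / pp) with hφ
  have hA0 : 0 < A := by linarith
  have hr1 : 1 ≤ r := by linarith
  have hp0 : 0 < p := by linarith
  have hpm0 : 0 < pm := by linarith
  have hpp0 : 0 < pp := by linarith
  rcases hf.eq_or_lt with h0 | h0
  · rw [← h0, zero_div, Real.zero_rpow hp0.ne']; positivity
  have hf1 : f ≤ A * t ^ (-n / r) := by
    have h3 := Real.rpow_le_rpow (by positivity) hfr (show 0 ≤ 1 / r by positivity)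
    rw [← Real.rpow_mul hf, mul_one_div_cancel (by positivity), Real.rpow_one,
      Real.mul_rpow hA0.le (by positivity), ← Real.rpow_mul ht.le, mul_one_div] at h3
    refine h3.trans ?_
    gcongr
    calc A ^ (1 / r) ≤ A ^ (1 : ℝ) :=
          Real.rpow_le_rpow_of_exponent_le hA (by rw [div_le_one (by positivity)]; exact hr1)
      _ = A := Real.rpow_one A
  have hf2 : f ^ (p - r) ≤ A ^ (p - r) * t ^ (-n / r * (p - r)) := by
    have := Real.rpow_le_rpow hf hf1 (show 0 ≤ p - r by linarith)
    rwa [Real.mul_rpow hA0.le (by positivity), ← Real.rpow_mul ht.le] at this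
  have hA2 : A ^ (p - r) * A ≤ A ^ p := by
    calc A ^ (p - r) * A = A ^ (p - r + 1) := by rw [Real.rpow_add hA0, Real.rpow_one]
      _ ≤ A ^ p := Real.rpow_le_rpow_of_exponent_le hA (by linarith)
  have hpinv : 1 / pp ≤ 1 / p := one_div_le_one_div_of_le hp0 h2
  have hpinv2 : 1 / p ≤ 1 / pm := one_div_le_one_div_of_le hpm0 h1
  have e1 : -n / r * (p - r) = - (n * p) * (2 / pm - 1 / p) := by
    rw [hr]; field_simp
  have e2 : -n * φ * p = - (n * p) * φ := by ring
  have hnp : 0 ≤ n * p := by positivity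
  have e3 : 2 / pm = 1 / pm + 1 / pm := by ring
  have ht2 : t ^ (-n / r * (p - r)) ≤ t ^ (-n * φ * p) := by
    rw [e1, e2]
    by_cases h : t ≤ 1
    · rw [hφ, if_pos h]
      apply Real.rpow_le_rpow_of_exponent_ge ht h
      nlinarith
    · rw [hφ, if_neg h]
      apply Real.rpow_le_rpow_of_exponent_le (by linarith)
      nlinarith
  rw [Real.div_rpow hf (by positivity), Real.mul_rpow hA0.le (by positivity), ← Real.rpow_mul ht.le,
    div_le_div_iff₀ (by positivity) hA0]
  have e4 : f ^ p = f ^ r * f ^ (p - r) := by rw [← Real.rpow_add h0]; ring_nf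
  rw [e4, mul_assoc]
  refine mul_le_mul_of_nonneg_left ?_ (by positivity)
  calc f ^ (p - r) * A ≤ A ^ (p - r) * t ^ (-n / r * (p - r)) * A := by gcongr
    _ = (A ^ (p - r) * A) * t ^ (-n / r * (p - r)) := by ring
    _ ≤ _ := by gcongr

/-- `L^{p(·)}` embeds in `L^{pm}`. -/
theorem aux_embed (n : ℕ) (hn : 1 ≤ n) (pexp : Esp n → ℝ) (hpmeas : Measurable pexp) (pm pp : ℝ)
    (h1 : ∀ᵐ x, pm ≤ pexp x) (h2 : ∀ᵐ x, pexp x ≤ pp)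
    (hlog : IsLogHolder n pexp (1 / pm)) (hpm : 2 ≤ pm) :
    ∃ K : ℝ≥0∞, K ≠ ∞ ∧ ∀ u : Esp n → ℝ, AEMeasurable u volume → vMod n pexp u ≤ 1 →
      ∫⁻ x, ENNReal.ofReal |u x| ^ pm ≤ K := by
  obtain ⟨c, hc, -, hlog⟩ := hlog
  set B := ENNReal.ofReal (Real.exp (n * (pp * pm * c))) with hB
  refine ⟨B + ∫⁻ x : Esp n, ENNReal.ofReal ((1 + ‖x‖) ^ (-(n * pm))), ?_, ?_⟩
  · refine ENNReal.add_ne_top.2 ⟨ENNReal.ofReal_ne_top, (finite_integral_one_add_norm ?_).ne⟩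
    have : (1 : ℝ) ≤ n := by exact_mod_cast hn
    rw [finrank_euclideanSpace_fin]
    nlinarith
  intro u hu hmod
  have hpt : ∀ᵐ x : Esp n, ENNReal.ofReal |u x| ^ pm ≤ B * ENNReal.ofReal |u x| ^ pexp x
      + ENNReal.ofReal ((1 + ‖x‖) ^ (-(n * pm))) := by
    filter_upwards [h1, h2] with x hx1 hx2
    have he : 1 ≤ Real.exp 1 := Real.one_le_exp zero_le_one
    have hE : 1 ≤ Real.exp 1 + ‖x‖ := by have := norm_nonneg x; linarith
    have hE1 : 1 < Real.exp 1 + ‖x‖ := by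
      have := norm_nonneg x; have := Real.add_one_lt_exp (one_ne_zero); linarith
    have := aux_pt |u x| _ (Real.log (Real.exp 1 + ‖x‖)) (pexp x) pm pp c n (abs_nonneg _) hE
      (Real.log_pos hE1) (Real.exp_log (by linarith)).symm hpm hx1 hx2 (by positivity) hc (hlog x)
    rw [ENNReal.ofReal_rpow_of_nonneg (abs_nonneg _) (by linarith),
      ENNReal.ofReal_rpow_of_nonneg (abs_nonneg _) (by linarith), hB,
      ← ENNReal.ofReal_mul (by positivity), ← ENNReal.ofReal_add (by positivity) (by positivity)]
    apply ENNReal.ofReal_le_ofReal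
    refine this.trans ?_
    have hnp : (0:ℝ) ≤ n * pm := by positivity
    refine add_le_add le_rfl ?_
    exact Real.rpow_le_rpow_of_nonpos (by positivity) (by gcongr) (by linarith)
  refine (lintegral_mono_ae hpt).trans ?_
  rw [lintegral_add_right _ (by fun_prop), lintegral_const_mul' _ _ ENNReal.ofReal_ne_top]
  gcongr
  calc B * _ ≤ B * 1 := by gcongr; exact hmod
    _ = B := mul_one B

/-- Main estimate for normalised functions. -/
theorem aux_main (n : ℕ) (hn : 1 ≤ n) (m : ℝ) (hm : (n : ℝ) < m)
    (pexp : Esp n → ℝ) (hpmeas : Measurable pexp) (pm pp : ℝ)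
    (h1 : ∀ᵐ x, pm ≤ pexp x) (h2 : ∀ᵐ x, pexp x ≤ pp)
    (hlog : IsLogHolder n pexp (1 / pm)) (hpm : 2 ≤ pm) :
    ∃ A : ℝ, 0 < A ∧ ∀ t : ℝ, 0 < t → ∀ u v : Esp n → ℝ,
      AEMeasurable u volume → AEMeasurable v volume → vMod n pexp u ≤ 1 → vMod n pexp v ≤ 1 →
      vMod n pexp (fun x => convR n (etaKer n t m) (fun x => u x * v x) x /
        (A * t ^ (-(n : ℝ) * (if t ≤ 1 then 2 / pm - 1 / pp else 1 / pp)))) ≤ 1 := by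
  obtain ⟨K, hK, hemb⟩ := aux_embed n hn pexp hpmeas pm pp h1 h2 hlog hpm
  set r := pm / 2 with hr
  have hr1 : 1 ≤ r := by rw [hr]; linarith
  have hr0 : 0 < r := by linarith
  set I := ∫⁻ x : Esp n, ENNReal.ofReal ((1 + ‖x‖) ^ (-m)) with hI
  have hIfin : I ≠ ∞ := (finite_integral_one_add_norm
    (by rw [finrank_euclideanSpace_fin]; exact hm)).ne
  set A' : ℝ≥0∞ := 1 + I ^ (r - 1) * (K + K) + I ^ (r - 1) * (I * (K + K)) with hA'
  have hIr : I ^ (r - 1) ≠ ∞ := ENNReal.rpow_ne_top_of_nonneg (by linarith) hIfin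
  have hKK : K + K ≠ ∞ := ENNReal.add_ne_top.2 ⟨hK, hK⟩
  have hA'fin : A' ≠ ∞ := by
    refine ENNReal.add_ne_top.2 ⟨ENNReal.add_ne_top.2 ⟨ENNReal.one_ne_top, ?_⟩, ?_⟩
    · exact ENNReal.mul_ne_top hIr hKK
    · exact ENNReal.mul_ne_top hIr (ENNReal.mul_ne_top hIfin hKK)
  have hA'1 : 1 ≤ A' := by rw [hA', add_assoc]; exact le_self_add
  have hA1 : 1 ≤ A'.toReal := by
    rw [← ENNReal.toReal_one]; exact ENNReal.toReal_mono hA'fin hA'1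
  have hAA : ENNReal.ofReal A'.toReal = A' := ENNReal.ofReal_toReal hA'fin
  refine ⟨A'.toReal, by linarith, ?_⟩
  intro t ht u v hu hv humod hvmod
  have hm0 : 0 ≤ m := le_trans (Nat.cast_nonneg n) hm.le
  set w : Esp n → ℝ≥0∞ := fun y => ENNReal.ofReal |u y * v y| with hw
  have hwm : AEMeasurable w volume :=
    (continuous_abs.measurable.comp_aemeasurable (hu.mul hv)).ennreal_ofReal
  have hwr : ∫⁻ y, w y ^ r ≤ K + K := by
    calc ∫⁻ y, w y ^ r ≤ ∫⁻ y, (ENNReal.ofReal |u y| ^ pm + ENNReal.ofReal |v y| ^ pm) := by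
          apply lintegral_mono
          intro y
          have e : ∀ a : ℝ≥0∞, a ^ pm = (a * a) ^ r := by
            intro a
            rw [ENNReal.mul_rpow_of_nonneg _ _ hr0.le, ← ENNReal.rpow_add_of_nonneg _ _ hr0.le hr0.le]
            congr 1; rw [hr]; ring
          simp only [hw, e, abs_mul]
          rw [ENNReal.ofReal_mul (abs_nonneg _)]
          rcases le_total (ENNReal.ofReal |u y|) (ENNReal.ofReal |v y|) with h | h
          · refine le_trans ?_ le_add_self
            gcongr
          · refine le_trans ?_ le_self_add
            gcongr
      _ = _ := lintegral_add_left' (hu.abs.ennreal_ofReal.pow_const _) _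
      _ ≤ K + K := add_le_add (hemb u hu humod) (hemb v hv hvmod)
  set g : Esp n → ℝ≥0∞ := fun z => ENNReal.ofReal (etaKer n t m z) with hg
  have hgm : Measurable g := (etaKer_meas n t m).ennreal_ofReal
  have hgI : ∫⁻ z, g z = I := etaKer_lint n t m ht
  set F : Esp n → ℝ≥0∞ := fun x => ∫⁻ y, g (x - y) * w y with hF
  have hconv : ∀ x, ENNReal.ofReal |convR n (etaKer n t m) (fun x => u x * v x) x| ≤ F x := by
    intro x
    rw [← Real.norm_eq_abs, ofReal_norm]
    refine (enorm_integral_le_lintegral_enorm _).trans (le_of_eq ?_)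
    apply lintegral_congr
    intro y
    rw [enorm_mul, ← ofReal_norm, ← ofReal_norm, Real.norm_eq_abs,
      Real.norm_eq_abs, abs_of_nonneg (etaKer_nonneg' n t m ht _)]
  have hJ : ∀ x, F x ^ r ≤ I ^ (r - 1) * ∫⁻ y, g (x - y) * w y ^ r := by
    intro x
    have := aux_jensen volume (fun y => g (x - y)) w (by fun_prop) hwm r hr1
    rwa [lintegral_sub_left_eq_self (fun z => g z) x, hgI] at this
  have hsup : ∀ x, F x ^ r ≤ A' * ENNReal.ofReal (t ^ (-(n : ℝ))) := by
    intro x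
    calc F x ^ r ≤ _ := hJ x
      _ ≤ I ^ (r - 1) * ∫⁻ y, ENNReal.ofReal (t ^ (-(n : ℝ))) * w y ^ r := by
          gcongr
          exact ENNReal.ofReal_le_ofReal (etaKer_le' n t m ht hm0 _)
      _ = I ^ (r - 1) * (ENNReal.ofReal (t ^ (-(n : ℝ))) * ∫⁻ y, w y ^ r) := by
          rw [lintegral_const_mul' _ _ ENNReal.ofReal_ne_top]
      _ ≤ I ^ (r - 1) * (ENNReal.ofReal (t ^ (-(n : ℝ))) * (K + K)) := by gcongr
      _ = (I ^ (r - 1) * (K + K)) * ENNReal.ofReal (t ^ (-(n : ℝ))) := by ring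
      _ ≤ _ := by
          gcongr
          rw [hA', add_comm 1, add_assoc]
          exact le_self_add
  have hint : ∫⁻ x, F x ^ r ≤ A' := by
    calc ∫⁻ x, F x ^ r ≤ ∫⁻ x, I ^ (r - 1) * ∫⁻ y, g (x - y) * w y ^ r := lintegral_mono hJ
      _ = I ^ (r - 1) * ∫⁻ x, ∫⁻ y, g (x - y) * w y ^ r := lintegral_const_mul' _ _ hIr
      _ = I ^ (r - 1) * ∫⁻ y, ∫⁻ x, g (x - y) * w y ^ r := by
          rw [lintegral_lintegral_swap]
          refine AEMeasurable.mul (Measurable.aemeasurable ?_) ?_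
          · exact hgm.comp (measurable_fst.sub measurable_snd)
          · exact (hwm.pow_const r).comp_snd
      _ = I ^ (r - 1) * ∫⁻ y, I * w y ^ r := by
          congr 1
          apply lintegral_congr
          intro y
          rw [lintegral_mul_const _ (by fun_prop), lintegral_sub_right_eq_self (fun z => g z) y, hgI]
      _ = I ^ (r - 1) * (I * ∫⁻ y, w y ^ r) := by rw [lintegral_const_mul' _ _ hIfin]
      _ ≤ I ^ (r - 1) * (I * (K + K)) := by gcongr
      _ ≤ A' := le_add_self
  unfold vMod
  have hpt : ∀ᵐ x : Esp n, ENNReal.ofReal |convR n (etaKer n t m) (fun x => u x * v x) x /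
        (A'.toReal * t ^ (-(n : ℝ) * (if t ≤ 1 then 2 / pm - 1 / pp else 1 / pp)))| ^ pexp x
        ≤ F x ^ r * A'⁻¹ := by
    filter_upwards [h1, h2] with x hx1 hx2
    set f := |convR n (etaKer n t m) (fun x => u x * v x) x| with hf
    have hfF : ENNReal.ofReal f ≤ F x := hconv x
    have hfr : f ^ r ≤ A'.toReal * t ^ (-(n : ℝ)) := by
      have h3 : ENNReal.ofReal f ^ r ≤ A' * ENNReal.ofReal (t ^ (-(n : ℝ))) :=
        (ENNReal.rpow_le_rpow hfF hr0.le).trans (hsup x)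
      rw [ENNReal.ofReal_rpow_of_nonneg (abs_nonneg _) hr0.le, ← hAA,
        ← ENNReal.ofReal_mul (by linarith)] at h3
      exact (ENNReal.ofReal_le_ofReal_iff (by positivity)).1 h3
    have h4 := aux_pt2 f A'.toReal t n r (pexp x) pm pp (abs_nonneg _) hA1 ht (by positivity) hr hpm
      hx1 hx2 hfr
    rw [abs_div, abs_of_nonneg (a := A'.toReal * _) (by positivity),
      ENNReal.ofReal_rpow_of_nonneg (by positivity) (by linarith)]
    refine (ENNReal.ofReal_le_ofReal h4).trans ?_
    rw [ENNReal.ofReal_div_of_pos (by linarith), hAA, div_eq_mul_inv,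
      ← ENNReal.ofReal_rpow_of_nonneg (abs_nonneg _) hr0.le]
    gcongr
  refine (lintegral_mono_ae hpt).trans ?_
  have hA0 : A' ≠ 0 := (lt_of_lt_of_le one_pos hA'1).ne'
  rw [lintegral_mul_const' _ _ (ENNReal.inv_ne_top.2 hA0)]
  calc _ ≤ A' * A'⁻¹ := by gcongr
    _ = 1 := ENNReal.mul_inv_cancel hA0 hA'fin

/-- Lemma 3.11, estimate (3.11) of the paper: for `p ∈ P^log` with `2 ≤ p⁻ = p_∞` and
`p⁺ < ∞`, `‖η_{t,m} * (uv)‖_{L^{p(·)}} ≤ C t^{-nφ(t)} ‖u‖_{L^{p(·)}} ‖v‖_{L^{p(·)}}`,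
where `φ(t) = 2/p⁻ - 1/p⁺` for `0 < t ≤ 1` and `φ(t) = 1/p⁺` for `t > 1`. -/
theorem statement10 (n : ℕ) (hn : 1 ≤ n) (m : ℝ) (hm : (n : ℝ) < m)
    (pexp : Esp n → ℝ) (hpmeas : Measurable pexp) (hp1 : ∀ x, 1 ≤ pexp x)
    (pm pp : ℝ) (hpm : pm = essInf pexp volume) (hpp : pp = essSup pexp volume)
    (hbdd : IsBoundedUnder (· ≤ ·) (ae (volume : Measure (Esp n))) pexp)
    (hlog : IsLogHolder n pexp (1 / pm))
    (h2pm : 2 ≤ pm) :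
    ∃ C : ℝ, 0 < C ∧ ∀ t : ℝ, 0 < t → ∀ u v : Esp n → ℝ,
      MemVLp n pexp u → MemVLp n pexp v →
      luxNorm n pexp (convR n (etaKer n t m) (fun x => u x * v x)) ≤
        C * t ^ (-(n : ℝ) * (if t ≤ 1 then 2 / pm - 1 / pp else 1 / pp)) *
          luxNorm n pexp u * luxNorm n pexp v := by
  have hb2 : IsBoundedUnder (· ≥ ·) (ae (volume : Measure (Esp n))) pexp :=
    ⟨1, Filter.eventually_map.2 (Filter.Eventually.of_forall hp1)⟩
  have h1 : ∀ᵐ x, pm ≤ pexp x := by rw [hpm]; exact ae_essInf_le hb2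
  have h2 : ∀ᵐ x, pexp x ≤ pp := by rw [hpp]; exact ae_le_essSup hbdd
  obtain ⟨A, hA, hmain⟩ := aux_main n hn m hm pexp hpmeas pm pp h1 h2 hlog h2pm
  refine ⟨A, hA, ?_⟩
  intro t ht u v hu hv
  set D := A * t ^ (-(n : ℝ) * (if t ≤ 1 then 2 / pm - 1 / pp else 1 / pp)) with hD
  have hD0 : 0 < D := by positivity
  have hnonneg : ∀ f : Esp n → ℝ, 0 ≤ luxNorm n pexp f := fun f =>
    Real.sInf_nonneg fun x hx => hx.1.le
  set a := luxNorm n pexp (convR n (etaKer n t m) (fun x => u x * v x)) with ha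
  have key : ∀ lam mu : ℝ, 0 < lam → vMod n pexp (fun x => u x / lam) ≤ 1 →
      0 < mu → vMod n pexp (fun x => v x / mu) ≤ 1 → a ≤ D * lam * mu := by
    intro lam mu hl hlu hmu hmv
    apply csInf_le ⟨0, fun x hx => hx.1.le⟩
    refine ⟨by positivity, ?_⟩
    have h3 := hmain t ht (fun x => u x / lam) (fun x => v x / mu) (hu.1.div_const _)
      (hv.1.div_const _) hlu hmv
    rw [← hD] at h3
    have h4 : ∀ x, convR n (etaKer n t m) (fun x => u x / lam * (v x / mu)) x =
        convR n (etaKer n t m) (fun x => u x * v x) x / (lam * mu) := by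
      intro x
      unfold convR
      rw [← integral_div]
      congr 1
      ext y
      field_simp
    simp only [h4, div_div] at h3
    have h5 : D * lam * mu = lam * mu * D := by ring
    rwa [h5]
  have step1 : ∀ lam : ℝ, 0 < lam → vMod n pexp (fun x => u x / lam) ≤ 1 →
      a ≤ D * lam * luxNorm n pexp v := by
    intro lam hl hlu
    have : a / (D * lam) ≤ luxNorm n pexp v := by
      apply le_csInf hv.2
      rintro mu ⟨hmu, hmv⟩
      rw [div_le_iff₀ (by positivity)]
      have := key lam mu hl hlu hmu hmv
      linarith
    rw [div_le_iff₀ (by positivity)] at this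
    linarith
  rcases (hnonneg v).eq_or_lt with h0 | h0
  · obtain ⟨lam, hl, hlu⟩ := hu.2
    have := step1 lam hl hlu
    rw [← h0] at this ⊢
    simpa using this
  · have : a / (D * luxNorm n pexp v) ≤ luxNorm n pexp u := by
      apply le_csInf hu.2
      rintro lam ⟨hl, hlu⟩
      rw [div_le_iff₀ (by positivity)]
      have := step1 lam hl hlu
      linarith
    rw [div_le_iff₀ (by positivity)] at this
    linarith
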